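/- arXiv:1910.07902 — 3 statements merged into one kernel-verified Lean document; each statement's English description precedes it below -/
import Mathlib

section
/- Let i denote the imaginary unit. Then (i/6) · ∫_{-∞}^{∞} (−3iξ² − 9ξ + 8i)(24ξ − 24ξ³) / ((ξ − i)³ (1 + ξ²)⁴) dξ = (7/8)π. -/
open Complex MeasureTheory

/-!
As `x` runs over the real line, `w = (x - c)⁻¹` runs once around a circle through `0`, with
`dw = -w ^ 2 dx`. By Cauchy's theorem `∫ w ^ 2 • f w dx = 0` for every entire `f`, so in a partial
fraction decomposition the poles of order at least two contribute nothing. The simple poles of our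
integrand at `±I` combine into `-(21 / 4) * I / (1 + ξ ^ 2)`, whose integral is `-(21 / 4) * I * π`.
-/

open Filter Topology

section CauchyOnInvertedLine

variable {E : Type*} [NormedAddCommGroup E] [NormedSpace ℂ E] {c : ℂ} {f g : ℂ → E}

lemma ofReal_sub_ne_zero (hc : c.im ≠ 0) (x : ℝ) : (x : ℂ) - c ≠ 0 := by
  intro h
  exact hc (by simpa using congrArg im h)

lemma continuous_inv_ofReal_sub (hc : c.im ≠ 0) : Continuous fun x : ℝ => ((x : ℂ) - c)⁻¹ :=
  (by fun_prop : Continuous fun x : ℝ => (x : ℂ) - c).inv₀ (ofReal_sub_ne_zero hc)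

lemma norm_inv_ofReal_sub_le (hc : c.im ≠ 0) (x : ℝ) : ‖((x : ℂ) - c)⁻¹‖ ≤ |c.im|⁻¹ := by
  rw [norm_inv]
  exact inv_anti₀ (abs_pos.mpr hc) (by simpa using abs_im_le_norm ((x : ℂ) - c))

lemma norm_inv_ofReal_sub_sq (hc : c.im ≠ 0) (x : ℝ) :
    ‖((x : ℂ) - c)⁻¹ ^ 2‖ = (c.im ^ 2)⁻¹ * (1 + ((x - c.re) / c.im) ^ 2)⁻¹ := by
  rw [norm_pow, norm_inv, inv_pow, ← normSq_eq_norm_sq, normSq_apply, ← mul_inv]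
  congr 1
  simp only [sub_re, ofReal_re, sub_im, ofReal_im]
  field_simp
  ring

lemma integrable_inv_ofReal_sub_sq (hc : c.im ≠ 0) :
    Integrable fun x : ℝ => ((x : ℂ) - c)⁻¹ ^ 2 := by
  have dominating : Integrable fun x : ℝ => (c.im ^ 2)⁻¹ * (1 + ((x - c.re) / c.im) ^ 2)⁻¹ :=
    ((integrable_inv_one_add_sq.comp_div hc).comp_sub_right c.re).const_mul _
  exact dominating.mono' ((continuous_inv_ofReal_sub hc).pow 2).aestronglyMeasurable
    (.of_forall fun x => (norm_inv_ofReal_sub_sq hc x).le)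

lemma integrable_inv_ofReal_sub_sq_smul_comp (hc : c.im ≠ 0) (hf : Continuous f) :
    Integrable fun x : ℝ => ((x : ℂ) - c)⁻¹ ^ 2 • f ((x : ℂ) - c)⁻¹ := by
  obtain ⟨B, hB⟩ := (isCompact_closedBall (0 : ℂ) |c.im|⁻¹).exists_bound_of_continuousOn
    hf.continuousOn
  exact (integrable_inv_ofReal_sub_sq hc).smul_bdd B
    (hf.comp (continuous_inv_ofReal_sub hc)).aestronglyMeasurable
    (.of_forall fun x => hB _ (by simpa using norm_inv_ofReal_sub_le hc x))

lemma hasDerivAt_inv_ofReal_sub (hc : c.im ≠ 0) (x : ℝ) :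
    HasDerivAt (fun x : ℝ => ((x : ℂ) - c)⁻¹) (-((x : ℂ) - c)⁻¹ ^ 2) x := by
  have := ((hasDerivAt_id x).ofReal_comp.sub_const c).fun_inv (ofReal_sub_ne_zero hc x)
  simpa [neg_div] using this

lemma tendsto_inv_ofReal_sub_cobounded (c : ℂ) :
    Tendsto (fun x : ℝ => ((x : ℂ) - c)⁻¹) (Bornology.cobounded ℝ) (𝓝 0) :=
  tendsto_inv₀_cobounded.comp
    ((tendsto_sub_const_cobounded c).comp (RCLike.tendsto_ofReal_cobounded_cobounded ℂ))

theorem integral_inv_ofReal_sub_sq_smul_comp_eq_zero [CompleteSpace E] (hc : c.im ≠ 0)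
    (hf : Differentiable ℂ f) :
    ∫ x : ℝ, ((x : ℂ) - c)⁻¹ ^ 2 • f ((x : ℂ) - c)⁻¹ = 0 := by
  obtain ⟨F, hF⟩ := hf.isExactOn_univ
  have hasDerivAt_primitive (x : ℝ) : HasDerivAt (fun x : ℝ => -F ((x : ℂ) - c)⁻¹)
      (((x : ℂ) - c)⁻¹ ^ 2 • f ((x : ℂ) - c)⁻¹) x := by
    simpa using! ((hF _ trivial).scomp x (hasDerivAt_inv_ofReal_sub hc x)).neg
  have tendsto_primitive :
      Tendsto (fun x : ℝ => -F ((x : ℂ) - c)⁻¹) (Bornology.cobounded ℝ) (𝓝 (-F 0)) :=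
    ((hF 0 trivial).continuousAt.tendsto.comp (tendsto_inv_ofReal_sub_cobounded c)).neg
  rw [integral_of_hasDerivAt_of_tendsto hasDerivAt_primitive
    (integrable_inv_ofReal_sub_sq_smul_comp hc hf.continuous)
    (tendsto_primitive.mono_left IsOrderBornology.atBot_le_cobounded)
    (tendsto_primitive.mono_left IsOrderBornology.atTop_le_cobounded), sub_self]

lemma integrable_inv_one_add_ofReal_sq : Integrable fun x : ℝ => (1 + (x : ℂ) ^ 2)⁻¹ := by
  simpa using integrable_inv_one_add_sq.ofReal (𝕜 := ℂ)

lemma integral_inv_one_add_ofReal_sq : ∫ x : ℝ, (1 + (x : ℂ) ^ 2)⁻¹ = (Real.pi : ℂ) := by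
  rw [← integral_univ_inv_one_add_sq, ← integral_complex_ofReal]
  simp

theorem integral_partialFractions_I_neg_I [CompleteSpace E] (a : E) (hf : Differentiable ℂ f)
    (hg : Differentiable ℂ g) :
    ∫ x : ℝ, ((1 + (x : ℂ) ^ 2)⁻¹ • a + ((x : ℂ) - I)⁻¹ ^ 2 • f ((x : ℂ) - I)⁻¹
      + ((x : ℂ) - -I)⁻¹ ^ 2 • g ((x : ℂ) - -I)⁻¹) = (Real.pi : ℂ) • a := by
  have im_I_ne : I.im ≠ 0 := by simp
  have im_neg_I_ne : (-I).im ≠ 0 := by simp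
  have int_a := integrable_inv_one_add_ofReal_sq.smul_const a
  have int_f := integrable_inv_ofReal_sub_sq_smul_comp im_I_ne hf.continuous
  have int_g := integrable_inv_ofReal_sub_sq_smul_comp im_neg_I_ne hg.continuous
  rw [integral_add (int_a.fun_add int_f) int_g, integral_add int_a int_f, integral_smul_const,
    integral_inv_one_add_ofReal_sq, integral_inv_ofReal_sub_sq_smul_comp_eq_zero im_I_ne hf,
    integral_inv_ofReal_sub_sq_smul_comp_eq_zero im_neg_I_ne hg, add_zero, add_zero]

end CauchyOnInvertedLine

/-- The part of order at least two of the principal part of the integrand at `I`, divided by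
`w ^ 2` and written in the variable `w = (z - I)⁻¹`. -/
noncomputable def multiplePoleFactorAtI (w : ℂ) : ℂ :=
  21 / 16 * I + 3 / 8 * w + 9 * w ^ 3 - 9 * I * w ^ 4 - 6 * w ^ 5

/-- The part of order at least two of the principal part of the integrand at `-I`, divided by
`w ^ 2` and written in the variable `w = (z + I)⁻¹`. -/
noncomputable def multiplePoleFactorAtNegI (w : ℂ) : ℂ :=
  63 / 16 * I - 45 / 8 * w - 15 / 2 * I * w ^ 2

lemma differentiable_multiplePoleFactorAtI : Differentiable ℂ multiplePoleFactorAtI := by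
  unfold multiplePoleFactorAtI
  fun_prop

lemma differentiable_multiplePoleFactorAtNegI : Differentiable ℂ multiplePoleFactorAtNegI := by
  unfold multiplePoleFactorAtNegI
  fun_prop

lemma integrand_eq_partialFractions {z : ℂ} (hI : z - I ≠ 0) (hNegI : z - -I ≠ 0) :
    ((-3 * I * z ^ 2 - 9 * z + 8 * I) * (24 * z - 24 * z ^ 3)) / ((z - I) ^ 3 * (1 + z ^ 2) ^ 4)
      = (1 + z ^ 2)⁻¹ • (-(21 / 4) * I) + (z - I)⁻¹ ^ 2 • multiplePoleFactorAtI (z - I)⁻¹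
        + (z - -I)⁻¹ ^ 2 • multiplePoleFactorAtNegI (z - -I)⁻¹ := by
  have factorization : 1 + z ^ 2 = (z - I) * (z - -I) := by linear_combination I_sq
  simp only [factorization, multiplePoleFactorAtI, multiplePoleFactorAtNegI, smul_eq_mul]
  field_simp
  grind [I_sq]

theorem stmt_0 :
    (I / 6) * ∫ ξ : ℝ,
        ((-3 * I * (ξ : ℂ) ^ 2 - 9 * (ξ : ℂ) + 8 * I) * (24 * (ξ : ℂ) - 24 * (ξ : ℂ) ^ 3)) /
          (((ξ : ℂ) - I) ^ 3 * (1 + (ξ : ℂ) ^ 2) ^ 4)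
      = (7 / 8) * (Real.pi : ℂ) := by
  have partialFractions (ξ : ℝ) := integrand_eq_partialFractions
    (ofReal_sub_ne_zero (c := I) (by simp) ξ) (ofReal_sub_ne_zero (c := -I) (by simp) ξ)
  simp only [partialFractions]
  rw [integral_partialFractions_I_neg_I _ differentiable_multiplePoleFactorAtI
    differentiable_multiplePoleFactorAtNegI, smul_eq_mul]
  linear_combination (-(7 / 8) * (Real.pi : ℂ)) * I_sq
end

section
/- Let i denote the imaginary unit. Then (i/2) · ∫_{-∞}^{∞} (4iξ − 9ξ² − 3iξ³) / ((ξ − i)³ (1 + ξ²)⁴) dξ = (11/128)π. -/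
open Complex MeasureTheory

/-!
For `w` in the upper and `z` in the lower half-plane, the residue theorem predicts
`∫ dx / ((x - w) ^ (m + 1) * (x - z) ^ (n + 1))
  = 2πi * (-1) ^ m * (m + n).choose m / (w - z) ^ (m + n + 1)`.
No contour is needed: the identity `(w - z) / ((x - w) * (x - z)) = 1 / (x - w) - 1 / (x - z)`
turns these integrals into a Pascal recurrence, whose boundary terms `∫ dx / (x - w) ^ (n + 2)`
vanish and whose initial term `m = n = 0` has a logarithmic primitive. In powers of `t = ξ - i` the
numerator `4iξ - 9ξ² - 3iξ³` is `2 - 5it - 3it³`, so the integral of the theorem is a combination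
of three of these with `w = i` and `z = -i`.
-/

section InverseLinearPowers

open Filter Topology

variable {w z : ℂ}

theorem ofReal_sub_ne_zero_s2 (hw : w.im ≠ 0) (x : ℝ) : (x : ℂ) - w ≠ 0 := by
  intro h
  apply hw
  simp [← sub_eq_zero.mp h]

theorem inv_norm_ofReal_sub_le (hw : w.im ≠ 0) (x : ℝ) :
    ‖(x : ℂ) - w‖⁻¹ ≤ (1 + (1 + ‖w‖) / |w.im|) * (1 + ‖x‖)⁻¹ := by
  have hpos : 0 < ‖(x : ℂ) - w‖ := norm_pos_iff.mpr (ofReal_sub_ne_zero_s2 hw x)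
  have him : |w.im| ≤ ‖(x : ℂ) - w‖ := by simpa using abs_im_le_norm ((x : ℂ) - w)
  have htri : ‖x‖ ≤ ‖(x : ℂ) - w‖ + ‖w‖ := by simpa using norm_add_le ((x : ℂ) - w) w
  have hscale : 1 + ‖w‖ ≤ (1 + ‖w‖) / |w.im| * ‖(x : ℂ) - w‖ := by
    rw [div_mul_eq_mul_div, le_div_iff₀ (abs_pos.mpr hw)]
    gcongr
  rw [← div_eq_mul_inv, le_div_iff₀ (by positivity), inv_mul_le_iff₀ hpos]
  linarith

theorem continuous_inv_pow_mul_pow (hw : w.im ≠ 0) (hz : z.im ≠ 0) (p q : ℕ) :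
    Continuous fun x : ℝ ↦ (((x : ℂ) - w) ^ p * ((x : ℂ) - z) ^ q)⁻¹ :=
  Continuous.inv₀ (by fun_prop) fun x ↦ mul_ne_zero
    (pow_ne_zero p (ofReal_sub_ne_zero_s2 hw x)) (pow_ne_zero q (ofReal_sub_ne_zero_s2 hz x))

theorem integrable_inv_pow_mul_pow (hw : w.im ≠ 0) (hz : z.im ≠ 0) {p q : ℕ}
    (hpq : 2 ≤ p + q) :
    Integrable fun x : ℝ ↦ (((x : ℂ) - w) ^ p * ((x : ℂ) - z) ^ q)⁻¹ := by
  set A := 1 + (1 + ‖w‖) / |w.im|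
  set B := 1 + (1 + ‖z‖) / |z.im|
  have hrank : (Module.finrank ℝ ℝ : ℝ) < (p + q : ℕ) := by
    rw [Module.finrank_self]
    exact_mod_cast hpq
  have hdecay : Integrable fun x : ℝ ↦ A ^ p * B ^ q * (1 + ‖x‖) ^ (-((p + q : ℕ) : ℝ)) :=
    (integrable_one_add_norm hrank).const_mul _
  refine hdecay.mono' (continuous_inv_pow_mul_pow hw hz p q).aestronglyMeasurable
    (.of_forall fun x ↦ ?_)
  calc ‖(((x : ℂ) - w) ^ p * ((x : ℂ) - z) ^ q)⁻¹‖
      = ‖(x : ℂ) - w‖⁻¹ ^ p * ‖(x : ℂ) - z‖⁻¹ ^ q := by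
        simp only [norm_inv, norm_mul, norm_pow, mul_inv, inv_pow]
    _ ≤ (A * (1 + ‖x‖)⁻¹) ^ p * (B * (1 + ‖x‖)⁻¹) ^ q := by
        gcongr
        · exact inv_norm_ofReal_sub_le hw x
        · exact inv_norm_ofReal_sub_le hz x
    _ = A ^ p * B ^ q * (1 + ‖x‖) ^ (-((p + q : ℕ) : ℝ)) := by
        rw [Real.rpow_neg (by positivity), Real.rpow_natCast, ← inv_pow, mul_pow, mul_pow, pow_add]
        ring

theorem hasDerivAt_ofReal_sub_const (w : ℂ) (x : ℝ) :
    HasDerivAt (fun x : ℝ ↦ (x : ℂ) - w) 1 x := by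
  simpa using (hasDerivAt_id x).ofReal_comp.sub_const w

theorem hasDerivAt_inv_ofReal_sub_pow (hw : w.im ≠ 0) (n : ℕ) (x : ℝ) :
    HasDerivAt (fun x : ℝ ↦ (((x : ℂ) - w) ^ (n + 1))⁻¹)
      (-(n + 1) * (((x : ℂ) - w) ^ (n + 2))⁻¹) x := by
  have hne := ofReal_sub_ne_zero_s2 hw x
  refine (((hasDerivAt_ofReal_sub_const w x).fun_pow (n + 1)).fun_inv
    (pow_ne_zero _ hne)).congr_deriv ?_
  rw [Nat.add_sub_cancel, Nat.cast_add, Nat.cast_one]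
  field_simp
  ring

theorem tendsto_inv_ofReal_sub_pow_cocompact (w : ℂ) (n : ℕ) :
    Tendsto (fun x : ℝ ↦ (((x : ℂ) - w) ^ (n + 1))⁻¹) (cocompact ℝ) (𝓝 0) := by
  have hsub : Tendsto (fun x : ℝ ↦ (x : ℂ) - w) (cocompact ℝ) (cocompact ℂ) :=
    ((Homeomorph.subRight w).isClosedEmbedding.comp
      isometry_ofReal.isClosedEmbedding).tendsto_cocompact
  simpa only [Function.comp_def, inv_pow, zero_pow n.succ_ne_zero] using
    ((tendsto_inv₀_cobounded (α := ℂ)).comp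
      (Metric.cobounded_eq_cocompact (α := ℂ) ▸ hsub)).pow (n + 1)

theorem integral_inv_ofReal_sub_pow (hw : w.im ≠ 0) (n : ℕ) :
    ∫ x : ℝ, (((x : ℂ) - w) ^ (n + 2))⁻¹ = 0 := by
  have hint : Integrable fun x : ℝ ↦ (((x : ℂ) - w) ^ (n + 2))⁻¹ := by
    simpa using integrable_inv_pow_mul_pow hw hw (p := n + 2) (q := 0) (by lia)
  have hlim := tendsto_inv_ofReal_sub_pow_cocompact w n
  have hzero : ∫ x : ℝ, -(n + 1 : ℂ) * (((x : ℂ) - w) ^ (n + 2))⁻¹ = 0 := by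
    simpa using integral_of_hasDerivAt_of_tendsto (hasDerivAt_inv_ofReal_sub_pow hw n)
      (hint.const_mul _) (hlim.mono_left atBot_le_cocompact) (hlim.mono_left atTop_le_cocompact)
  rw [integral_const_mul] at hzero
  exact (mul_eq_zero.mp hzero).resolve_left (neg_ne_zero.mpr n.cast_add_one_ne_zero)

theorem tendsto_log_mul_sub_sub_log_atTop {a : ℂ} (ha : a ∈ slitPlane) (w : ℂ) :
    Tendsto (fun x : ℝ ↦ log (a * (x - w)) - Real.log x) atTop (𝓝 (log a)) := by
  have hlim : Tendsto (fun x : ℝ ↦ a * (1 - w * (x⁻¹ : ℝ))) atTop (𝓝 a) := by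
    simpa using ((((continuous_ofReal.tendsto 0).comp
      tendsto_inv_atTop_zero).const_mul w).const_sub 1).const_mul a
  refine (hlim.clog ha).congr' ?_
  filter_upwards [hlim.eventually_ne (slitPlane_ne_zero ha), eventually_gt_atTop 0]
    with x hne hpos
  have hfactor : a * (x - w) = x * (a * (1 - w * (x⁻¹ : ℝ))) := by
    have : (x : ℂ) ≠ 0 := ofReal_ne_zero.mpr hpos.ne'
    push_cast
    field_simp
  rw [hfactor, log_ofReal_mul hpos hne, add_sub_cancel_left]

theorem tendsto_log_mul_sub_sub_log_atBot {a : ℂ} (ha : -a ∈ slitPlane) (w : ℂ) :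
    Tendsto (fun x : ℝ ↦ log (a * (x - w)) - Real.log x) atBot (𝓝 (log (-a))) := by
  refine ((tendsto_log_mul_sub_sub_log_atTop ha (-w)).comp tendsto_neg_atBot_atTop).congr fun x ↦ ?_
  simp only [Function.comp_apply, Real.log_neg_eq_log, ofReal_neg]
  ring_nf

theorem hasDerivAt_log_mul_sub {a : ℂ} {x : ℝ} (h : a * (x - w) ∈ slitPlane) :
    HasDerivAt (fun x : ℝ ↦ log (a * (x - w))) ((x : ℂ) - w)⁻¹ x := by
  obtain ⟨ha, hx⟩ := mul_ne_zero_iff.mp (slitPlane_ne_zero h)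
  refine (((hasDerivAt_ofReal_sub_const w x).const_mul a).clog_real h).congr_deriv ?_
  field_simp

theorem inv_pow_mul_pow_recurrence (hw : w.im ≠ 0) (hz : z.im ≠ 0) (m n : ℕ) (x : ℝ) :
    (w - z) * (((x : ℂ) - w) ^ (m + 1) * ((x : ℂ) - z) ^ (n + 1))⁻¹ =
      (((x : ℂ) - w) ^ (m + 1) * ((x : ℂ) - z) ^ n)⁻¹ -
        (((x : ℂ) - w) ^ m * ((x : ℂ) - z) ^ (n + 1))⁻¹ := by
  have := ofReal_sub_ne_zero_s2 hw x
  have := ofReal_sub_ne_zero_s2 hz x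
  field_simp
  ring

theorem integral_inv_pow_mul_pow_recurrence (hw : w.im ≠ 0) (hz : z.im ≠ 0) {m n : ℕ}
    (hmn : 1 ≤ m + n) :
    (w - z) * ∫ x : ℝ, (((x : ℂ) - w) ^ (m + 1) * ((x : ℂ) - z) ^ (n + 1))⁻¹ =
      (∫ x : ℝ, (((x : ℂ) - w) ^ (m + 1) * ((x : ℂ) - z) ^ n)⁻¹) -
        ∫ x : ℝ, (((x : ℂ) - w) ^ m * ((x : ℂ) - z) ^ (n + 1))⁻¹ := by
  rw [← integral_const_mul, ← integral_sub (integrable_inv_pow_mul_pow hw hz (by lia))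
    (integrable_inv_pow_mul_pow hw hz (by lia))]
  exact integral_congr_ae (.of_forall (inv_pow_mul_pow_recurrence hw hz m n))

-- The factors `±I` rotate `x - w` and `x - z` into the right half-plane, away from the branch cut.
-- The two terms `Real.log x` cancel; each makes its half of the primitive converge at `±∞`.
theorem integral_inv_mul (hw : 0 < w.im) (hz : z.im < 0) :
    (w - z) * ∫ x : ℝ, (((x : ℂ) - w) * ((x : ℂ) - z))⁻¹ = 2 * Real.pi * I := by
  have hderiv (x : ℝ) : HasDerivAt
      (fun x : ℝ ↦ (log (I * (x - w)) - Real.log x) - (log (-I * (x - z)) - Real.log x))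
      ((w - z) * (((x : ℂ) - w) * ((x : ℂ) - z))⁻¹) x := by
    have hlogw := hasDerivAt_log_mul_sub (w := w) (a := I) (x := x) (.inl (by simpa using hw))
    have hlogz := hasDerivAt_log_mul_sub (w := z) (a := -I) (x := x) (.inl (by simpa using hz))
    simp only [sub_sub_sub_cancel_right]
    refine (hlogw.sub hlogz).congr_deriv ?_
    simpa using (inv_pow_mul_pow_recurrence hw.ne' hz.ne 0 0 x).symm
  have hI : I ∈ slitPlane := .inr (by simp)
  have hnegI : -I ∈ slitPlane := .inr (by simp)
  have hint : Integrable fun x : ℝ ↦ (((x : ℂ) - w) * ((x : ℂ) - z))⁻¹ := by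
    simpa using integrable_inv_pow_mul_pow hw.ne' hz.ne (p := 1) (q := 1) le_rfl
  rw [← integral_const_mul, integral_of_hasDerivAt_of_tendsto hderiv (hint.const_mul _)
    ((tendsto_log_mul_sub_sub_log_atBot hnegI w).sub
      (tendsto_log_mul_sub_sub_log_atBot (by rwa [neg_neg]) z))
    ((tendsto_log_mul_sub_sub_log_atTop hI w).sub (tendsto_log_mul_sub_sub_log_atTop hnegI z)),
    neg_neg, log_I, log_neg_I]
  ring

theorem integral_inv_pow_mul_pow (hw : 0 < w.im) (hz : z.im < 0) (m n : ℕ) :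
    ∫ x : ℝ, (((x : ℂ) - w) ^ (m + 1) * ((x : ℂ) - z) ^ (n + 1))⁻¹ =
      2 * Real.pi * I * (-1) ^ m * (m + n).choose m / (w - z) ^ (m + n + 1) := by
  have hwz : w - z ≠ 0 := sub_ne_zero.mpr fun h ↦ (hz.trans hw).ne (congrArg im h).symm
  have hrec {m n : ℕ} := integral_inv_pow_mul_pow_recurrence hw.ne' hz.ne (m := m) (n := n)
  apply mul_left_cancel₀ hwz
  induction m generalizing n with
  | zero =>
    induction n with
    | zero => simpa [mul_div_cancel₀ _ hwz] using integral_inv_mul hw hz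
    | succ n ihn =>
      rw [hrec (by lia), mul_left_cancel₀ hwz ihn]
      simp only [pow_zero, one_mul, integral_inv_ofReal_sub_pow hz.ne, Nat.choose_zero_right]
      field_simp
      ring
  | succ m ihm =>
    induction n with
    | zero =>
      rw [hrec (by lia), mul_left_cancel₀ hwz (ihm 0)]
      simp only [pow_zero, mul_one, integral_inv_ofReal_sub_pow hw.ne', add_zero, Nat.choose_self]
      field_simp
      ring
    | succ n ihn =>
      have hpascal : (m + 1 + (n + 1)).choose (m + 1) =
          (m + (n + 1)).choose m + (m + 1 + n).choose (m + 1) := by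
        rw [Nat.add_right_comm, Nat.choose_succ_succ', Nat.add_right_comm m 1 n, Nat.add_assoc]
      rw [hrec (by lia), mul_left_cancel₀ hwz ihn, mul_left_cancel₀ hwz (ihm (n + 1)), hpascal]
      push_cast
      field_simp
      ring

end InverseLinearPowers

theorem integrand_eq_sum_inv_pow_mul_pow (ξ : ℝ) :
    (4 * I * (ξ : ℂ) - 9 * (ξ : ℂ) ^ 2 - 3 * I * (ξ : ℂ) ^ 3) /
        (((ξ : ℂ) - I) ^ 3 * (1 + (ξ : ℂ) ^ 2) ^ 4) =
      2 * (((ξ : ℂ) - I) ^ 7 * ((ξ : ℂ) - -I) ^ 4)⁻¹ +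
        -5 * I * (((ξ : ℂ) - I) ^ 6 * ((ξ : ℂ) - -I) ^ 4)⁻¹ +
        -3 * I * (((ξ : ℂ) - I) ^ 4 * ((ξ : ℂ) - -I) ^ 4)⁻¹ := by
  have hI : (ξ : ℂ) - I ≠ 0 := ofReal_sub_ne_zero_s2 (by simp) ξ
  have hnegI : (ξ : ℂ) - -I ≠ 0 := ofReal_sub_ne_zero_s2 (by simp) ξ
  have hnum : 4 * I * (ξ : ℂ) - 9 * (ξ : ℂ) ^ 2 - 3 * I * (ξ : ℂ) ^ 3 =
      2 - 5 * I * (ξ - I) - 3 * I * (ξ - I) ^ 3 := by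
    linear_combination (-9 * (ξ : ℂ) ^ 2 + 9 * I * ξ - 3 * I ^ 2 - 2) * I_sq
  have hden : 1 + (ξ : ℂ) ^ 2 = (ξ - I) * (ξ - -I) := by linear_combination I_sq
  rw [hnum, hden]
  field_simp
  ring

theorem stmt_2 :
    (I / 2) * ∫ ξ : ℝ,
        (4 * I * (ξ : ℂ) - 9 * (ξ : ℂ) ^ 2 - 3 * I * (ξ : ℂ) ^ 3) /
          (((ξ : ℂ) - I) ^ 3 * (1 + (ξ : ℂ) ^ 2) ^ 4)
      = (11 / 128) * (Real.pi : ℂ) := by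
  have hI : 0 < I.im := by simp
  have hnegI : (-I).im < 0 := by simp
  have hint (c : ℂ) (p : ℕ) :
      Integrable fun ξ : ℝ ↦ c * (((ξ : ℂ) - I) ^ p * ((ξ : ℂ) - -I) ^ 4)⁻¹ :=
    (integrable_inv_pow_mul_pow hI.ne' hnegI.ne (by lia)).const_mul c
  have hpow (k : ℕ) : (I - -I) ^ k = 2 ^ k * I ^ (k % 4) := by
    rw [sub_neg_eq_add, ← two_mul, mul_pow, I_pow_eq_pow_mod]
  have hchoose : (6 + 3).choose 6 = 84 ∧ (5 + 3).choose 5 = 56 ∧ (3 + 3).choose 3 = 20 := by decide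
  simp only [integrand_eq_sum_inv_pow_mul_pow]
  rw [integral_add ((hint _ _).fun_add (hint _ _)) (hint _ _), integral_add (hint _ _) (hint _ _),
    integral_const_mul, integral_const_mul, integral_const_mul,
    integral_inv_pow_mul_pow hI hnegI 6 3, integral_inv_pow_mul_pow hI hnegI 5 3,
    integral_inv_pow_mul_pow hI hnegI 3 3, hpow, hpow, hpow, hchoose.1, hchoose.2.1, hchoose.2.2]
  push_cast
  field_simp
  rw [I_sq]
  norm_num
end

section
/- Let i denote the imaginary unit and consider the function F(z) = (−5iz − 3iz³)/(1 + z²)³ − (9i − 7z)/(8(z − i)³), defined for complex z with z ∉ {i, −i}. Then F(z) tends to the limit −1/4 as z → i (through values z ∉ {i, −i}). In other words, the part of (−5iξ − 3iξ³)/(1 + ξ²)³ with its only pole at ξ = i and vanishing at infinity is (9i − 7ξ)/(8(ξ − i)³). -/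
open Complex Filter Topology

/-!
Write `h z = (-5iz - 3iz³) / (1 + z²)³` and `h⁺ z = (9i - 7z) / (8(z - i)³)`. Since `h` is odd,
its part with pole at `-i` must be `h⁻ z = -h⁺ (-z) = (9i + 7z) / (8(z + i)³)`. So `h - h⁺`
coincides with `h⁻` away from `±i`, and `h⁻` is continuous at `i` with value
`16i / (8(2i)³) = -1/4`.
-/

theorem tendsto_sub_nhdsWithin_of_eqOn_add {X G : Type*} [TopologicalSpace X] [TopologicalSpace G]
    [AddCommGroup G] {h p m : X → G} {s : Set X} {a : X}
    (hs : Set.EqOn h (fun x => p x + m x) s) (hm : ContinuousAt m a) :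
    Tendsto (fun x => h x - p x) (𝓝[s] a) (𝓝 (m a)) := by
  have hsub : Set.EqOn m (fun x => h x - p x) s := fun x hx =>
    eq_sub_of_add_eq' (hs hx).symm
  exact hm.continuousWithinAt.tendsto.congr' hsub.eventuallyEq_nhdsWithin

section CommRing

variable {R : Type*} [CommRing R] {i : R}

theorem one_add_sq_eq_sub_mul_add (hi : i ^ 2 = -1) (z : R) :
    1 + z ^ 2 = (z - i) * (z + i) := by
  linear_combination hi

theorem eight_mul_numerator_eq (hi : i ^ 2 = -1) (z : R) :
    8 * (-5 * i * z - 3 * i * z ^ 3) =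
      (9 * i - 7 * z) * (z + i) ^ 3 + (9 * i + 7 * z) * (z - i) ^ 3 := by
  linear_combination -40 * i * z * hi

end CommRing

section Field

variable {K : Type*} [Field K] {i : K}

/-- The part `h⁻` of `h z = (-5iz - 3iz³) / (1 + z²)³` with its only pole at `-i`, over a field
with a square root `i` of `-1`. -/
def minusPart (i z : K) : K :=
  (9 * i + 7 * z) / (8 * (z + i) ^ 3)

theorem div_one_add_sq_pow_three_eq_add_minusPart (hi : i ^ 2 = -1) (h2 : (2 : K) ≠ 0) {z : K}
    (hz : z ≠ i) (hz' : z ≠ -i) :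
    (-5 * i * z - 3 * i * z ^ 3) / (1 + z ^ 2) ^ 3 =
      (9 * i - 7 * z) / (8 * (z - i) ^ 3) + minusPart i z := by
  have hsub : z - i ≠ 0 := sub_ne_zero.2 hz
  have hadd : z + i ≠ 0 := fun h => hz' (eq_neg_of_add_eq_zero_left h)
  have h8 : (8 : K) ≠ 0 := by
    rw [show (8 : K) = 2 ^ 3 by norm_num]
    exact pow_ne_zero 3 h2
  rw [one_add_sq_eq_sub_mul_add hi, minusPart]
  field_simp
  linear_combination eight_mul_numerator_eq hi z

theorem eight_mul_add_self_pow_three_ne_zero (hi : i ^ 2 = -1) (h2 : (2 : K) ≠ 0) :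
    8 * (i + i) ^ 3 ≠ 0 := by
  have hi0 : i ≠ 0 := by
    rintro rfl
    simp at hi
  rw [show 8 * (i + i) ^ 3 = 2 ^ 6 * i ^ 3 by ring]
  exact mul_ne_zero (pow_ne_zero 6 h2) (pow_ne_zero 3 hi0)

theorem minusPart_self (hi : i ^ 2 = -1) (h2 : (2 : K) ≠ 0) :
    minusPart i i = -1 / 4 := by
  have h4 : (4 : K) ≠ 0 := by
    rw [show (4 : K) = 2 ^ 2 by norm_num]
    exact pow_ne_zero 2 h2
  rw [minusPart, div_eq_div_iff (eight_mul_add_self_pow_three_ne_zero hi h2) h4]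
  linear_combination 64 * i * hi

theorem continuousAt_minusPart [TopologicalSpace K] [IsTopologicalDivisionRing K]
    (hi : i ^ 2 = -1) (h2 : (2 : K) ≠ 0) :
    ContinuousAt (minusPart i) i :=
  ContinuousAt.div₀ (by fun_prop) (by fun_prop) (eight_mul_add_self_pow_three_ne_zero hi h2)

theorem stmt_16_general [TopologicalSpace K] [IsTopologicalDivisionRing K]
    (hi : i ^ 2 = -1) (h2 : (2 : K) ≠ 0) :
    Tendsto
      (fun z : K =>
        (-5 * i * z - 3 * i * z ^ 3) / (1 + z ^ 2) ^ 3 - (9 * i - 7 * z) / (8 * (z - i) ^ 3))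
      (𝓝[{i, -i}ᶜ] i) (𝓝 (-1 / 4)) := by
  rw [← minusPart_self hi h2]
  refine tendsto_sub_nhdsWithin_of_eqOn_add (fun z hz => ?_) (continuousAt_minusPart hi h2)
  obtain ⟨hz, hz'⟩ : z ≠ i ∧ z ≠ -i := by simpa using hz
  exact div_one_add_sq_pow_three_eq_add_minusPart hi h2 hz hz'

end Field

theorem stmt_16 :
    Tendsto
      (fun z : ℂ =>
        (-5 * I * z - 3 * I * z ^ 3) / (1 + z ^ 2) ^ 3 - (9 * I - 7 * z) / (8 * (z - I) ^ 3))
      (𝓝[{I, -I}ᶜ] I) (𝓝 (-1 / 4)) := by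
  exact stmt_16_general I_sq two_ne_zero
end
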